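/- Let G be a hierarchical structure on N with more than one level, with exactly one strongly connected component per level, each of which is a complete connected component containing more than two nodes, and whose single edges are exactly the following: for all p, q ∈ N with ℓ_q(C(G)) = ℓ_p(C(G)) + 1, the edge pq ∈ G (that is, every node has a single edge to every node exactly one level above it, and there are no other single edges). Then there exist utility parameters (γ,H,c) such that G is an equilibrium network for consensual agents with parameters (γ,H,c). -/

import Mathlib

/-!
The parameters are `γ = c = 1` and `H m = (n + 2) m`, so that losing a level outweighs any gain
from one extra out-edge together with all the costs (which total at most `n`).

* Deleting `ij` never pays: as components have at least three nodes, there is a third node `m` in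
  the component of `i` such that `i → m → j` is a detour, so levels do not change; `i` loses `γ`
  and its costs do not decrease.
* Adding `ij` with `j` at least two levels above `i` leaves all levels unchanged; `i` gains, but `j`
  acquires an extra subordinate with no offsetting benefit, so `j` refuses.
* Adding `ij` with `j` below `i` closes a cycle merging all levels between them, so `i` drops to the
  level of `j`, which costs at least `n + 2`, more than it can gain.

Levels of the modified networks are obtained by exhibiting a rank function on the nodes: it bounds
the level from above if it is monotone along edges and its fibres lie inside components
(`level_le_of_rank`), and it equals the level if moreover every node of positive rank has an
in-neighbour one rank below (`level_eq_of_rank`).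
-/

open Finset MeasureTheory ProbabilityTheory

attribute [local instance 10] Classical.propDecidable

noncomputable section

/-- A digraph on the agent set `Fin n`: a finite set of ordered pairs (directed edges). -/
abbrev Network (n : ℕ) := Finset (Fin n × Fin n)

variable {n : ℕ}

/-- Edges only join distinct nodes. -/
def validNetwork (G : Network n) : Prop := ∀ p ∈ G, p.1 ≠ p.2

/-- Out-neighborhood `N_out(i,G)`. -/
def Nout (G : Network n) (i : Fin n) : Finset (Fin n) := univ.filter fun j => (i, j) ∈ G

/-- The set of subordinates `N_in^s(i,G)`. -/
def NinS (G : Network n) (i : Fin n) : Finset (Fin n) :=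
  univ.filter fun j => (j, i) ∈ G ∧ (i, j) ∉ G

/-- `P_i(G,k) = {i} ∪ {j : kj ∈ G and ij, ji ∈ G}`. -/
def Pset (G : Network n) (i k : Fin n) : Finset (Fin n) :=
  insert i (univ.filter fun j => (k, j) ∈ G ∧ (i, j) ∈ G ∧ (j, i) ∈ G)

/-- `P_i(G) = ⋂_{k ∈ N_in^s(i,G)} P_i(G,k)`. -/
def Pall (G : Network n) (i : Fin n) : Finset (Fin n) :=
  univ.filter fun j => ∀ k ∈ NinS G i, j ∈ Pset G i k

/-- Reachability along directed edges. -/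
def reach (G : Network n) : Fin n → Fin n → Prop :=
  Relation.ReflTransGen fun a b => (a, b) ∈ G

/-- `i` and `j` belong to the same strongly connected component. -/
def sameSCC (G : Network n) (i j : Fin n) : Prop := reach G i j ∧ reach G j i

/-- The strongly connected component `Γ(i,G)` of `i`. -/
def sccSet (G : Network n) (i : Fin n) : Finset (Fin n) := univ.filter fun j => sameSCC G i j

/-- An arc of the condensation `C(G)`, between the SCC of `a` and the SCC of `b`. -/
def condArc (G : Network n) (a b : Fin n) : Prop :=
  ¬ sameSCC G a b ∧ ∃ a' b' : Fin n, sameSCC G a a' ∧ sameSCC G b b' ∧ (a', b') ∈ G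

/-- The SCC of `a` is a source of the condensation `C(G)`. -/
def isSourceSCC (G : Network n) (a : Fin n) : Prop := ∀ b, ¬ condArc G b a

/-- The level `ℓ_i(C(G))`: the largest number of arcs on a directed path in the
condensation `C(G)` from a source of `C(G)` to the SCC of `i`. -/
def level (G : Network n) (i : Fin n) : ℕ :=
  sSup {m : ℕ | ∃ f : ℕ → Fin n, isSourceSCC G (f 0) ∧ sameSCC G (f m) i ∧
    ∀ t, t < m → condArc G (f t) (f (t + 1))}

/-- The utility `u_i(G)` of agent `i` in the network `G`. -/
def utility (γ c : ℝ) (H : ℕ → ℝ) (G : Network n) (i : Fin n) : ℝ :=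
  ((Nout G i).card : ℝ) * γ + H (level G i)
    - c * ∑ k ∈ NinS G i, (1 : ℝ) / ((Pset G i k).card : ℝ)

/-- Utility parameters: `γ > 0`, `c > 0`, `H` strictly increasing with `H 0 ≥ 0`. -/
def UtilityParams (γ c : ℝ) (H : ℕ → ℝ) : Prop :=
  0 < γ ∧ 0 < c ∧ StrictMono H ∧ 0 ≤ H 0

/-- Equilibrium network for non-consensual agents. -/
def eqNonConsensual (γ c : ℝ) (H : ℕ → ℝ) (G : Network n) : Prop :=
  ∀ i j : Fin n, i ≠ j →
    ((i, j) ∈ G → utility γ c H (G.erase (i, j)) i < utility γ c H G i) ∧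
    ((i, j) ∉ G → utility γ c H (insert (i, j) G) i < utility γ c H G i)

/-- Equilibrium network for consensual agents. -/
def eqConsensual (γ c : ℝ) (H : ℕ → ℝ) (G : Network n) : Prop :=
  ∀ i j : Fin n, i ≠ j →
    ((i, j) ∈ G → utility γ c H (G.erase (i, j)) i < utility γ c H G i) ∧
    ((i, j) ∉ G →
      utility γ c H (insert (i, j) G) i < utility γ c H G i ∨
        (utility γ c H G i ≤ utility γ c H (insert (i, j) G) i ∧
          utility γ c H (insert (i, j) G) j < utility γ c H G j))

/-- `G` has no directed cycles: every edge joining two nodes of the same SCC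
is an undirected edge. -/
def noDirectedCycles (G : Network n) : Prop :=
  ∀ i j : Fin n, (i, j) ∈ G → sameSCC G i j → (j, i) ∈ G

/-- Reachability forgetting edge directions. -/
def weakReach (G : Network n) : Fin n → Fin n → Prop :=
  Relation.ReflTransGen fun a b => (a, b) ∈ G ∨ (b, a) ∈ G

/-- `G` is weakly connected. -/
def weaklyConnected (G : Network n) : Prop := ∀ i j : Fin n, weakReach G i j

/-- Every SCC of `G` is a complete connected component: any two distinct nodes of
the same SCC are joined by an undirected edge. -/
def completeSCCs (G : Network n) : Prop :=
  ∀ i j : Fin n, i ≠ j → sameSCC G i j → (i, j) ∈ G ∧ (j, i) ∈ G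

/-- The undirected edge `ij, ji ∈ G` is critical: `Γ(i,G) ≠ Γ(i, G - ij)`. -/
def criticalEdge (G : Network n) (i j : Fin n) : Prop :=
  (i, j) ∈ G ∧ (j, i) ∈ G ∧
    {k : Fin n | sameSCC G i k} ≠ {k : Fin n | sameSCC (G.erase (i, j)) i k}

/-- `L_ℓ(G) = |{j : ℓ_j(C(G)) < ℓ}|`. -/
def Lcard (G : Network n) (ℓ : ℕ) : ℕ :=
  (univ.filter fun j : Fin n => level G j < ℓ).card

/-- `G` is a sequential hierarchy: weakly connected, no directed cycles, exactly one
SCC per level, and (if more than one level) every node has a single edge towards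
every node of strictly higher level. -/
def seqHierarchy (G : Network n) : Prop :=
  weaklyConnected G ∧ noDirectedCycles G ∧
  (∀ i j : Fin n, level G i = level G j → sameSCC G i j) ∧
  ((∃ i j : Fin n, level G i ≠ level G j) →
    ∀ i j : Fin n, level G i < level G j → (i, j) ∈ G ∧ (j, i) ∉ G)

/-- The better-response update of `G` at the ordered pair `p = (i,j)`. -/
def brUpdate (consensual : Bool) (γ c : ℝ) (H : ℕ → ℝ) (G : Network n)
    (p : Fin n × Fin n) : Network n :=
  if p ∈ G then
    if utility γ c H G p.1 ≤ utility γ c H (G.erase p) p.1 then G.erase p else G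
  else if consensual then
    if utility γ c H G p.1 ≤ utility γ c H (insert p G) p.1 ∧
        utility γ c H G p.2 ≤ utility γ c H (insert p G) p.2 then insert p G else G
  else
    if utility γ c H G p.1 ≤ utility γ c H (insert p G) p.1 then insert p G else G

/-- Equilibrium network for the given agent type. -/
def equilibrium (consensual : Bool) (γ c : ℝ) (H : ℕ → ℝ) (G : Network n) : Prop :=
  if consensual then eqConsensual γ c H G else eqNonConsensual γ c H G

/-! ### Reachability and levels -/

theorem sameSCC_refl (G : Network n) (a : Fin n) : sameSCC G a a :=
  ⟨Relation.ReflTransGen.refl, Relation.ReflTransGen.refl⟩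

theorem sameSCC_symm {G : Network n} {a b : Fin n} (h : sameSCC G a b) : sameSCC G b a :=
  ⟨h.2, h.1⟩

theorem sameSCC_trans {G : Network n} {a b d : Fin n} (h : sameSCC G a b) (h' : sameSCC G b d) :
    sameSCC G a d :=
  ⟨Relation.ReflTransGen.trans h.1 h'.1, Relation.ReflTransGen.trans h'.2 h.2⟩

theorem reach_of_edges {G G' : Network n} (h : ∀ a b, (a, b) ∈ G → reach G' a b) {a b : Fin n}
    (hab : reach G a b) : reach G' a b := by
  induction hab with
  | refl => exact Relation.ReflTransGen.refl
  | tail _ hbc ih => exact Relation.ReflTransGen.trans ih (h _ _ hbc)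

theorem rank_le_of_reach {G : Network n} {r : Fin n → ℕ}
    (h1 : ∀ a b, (a, b) ∈ G → r a ≤ r b) {a b : Fin n} (hab : reach G a b) : r a ≤ r b := by
  induction hab with
  | refl => exact le_rfl
  | tail _ hbc ih => exact ih.trans (h1 _ _ hbc)

theorem rank_eq_of_sameSCC {G : Network n} {r : Fin n → ℕ}
    (h1 : ∀ a b, (a, b) ∈ G → r a ≤ r b) {a b : Fin n} (hab : sameSCC G a b) : r a = r b :=
  le_antisymm (rank_le_of_reach h1 hab.1) (rank_le_of_reach h1 hab.2)

theorem level_congr {G : Network n} {a b : Fin n} (h : sameSCC G a b) :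
    level G a = level G b := by
  unfold level
  congr 1
  ext m
  constructor
  · rintro ⟨f, h0, hm, hf⟩
    exact ⟨f, h0, sameSCC_trans hm h, hf⟩
  · rintro ⟨f, h0, hm, hf⟩
    exact ⟨f, h0, sameSCC_trans hm (sameSCC_symm h), hf⟩

theorem rank_lt_of_condArc {G : Network n} {r : Fin n → ℕ}
    (h1 : ∀ a b, (a, b) ∈ G → r a ≤ r b) (h2 : ∀ a b, r a = r b → sameSCC G a b)
    {a b : Fin n} (h : condArc G a b) : r a < r b := by
  obtain ⟨hn, a', b', ha, hb, hab⟩ := h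
  have e1 := rank_eq_of_sameSCC h1 ha
  have e2 := rank_eq_of_sameSCC h1 hb
  have e3 := h1 _ _ hab
  have e4 : r a ≠ r b := fun h => hn (h2 _ _ h)
  omega

/-- Along a path of the condensation the rank increases at least by one per arc. -/
theorem path_length_le_rank {G : Network n} {r : Fin n → ℕ}
    (h1 : ∀ a b, (a, b) ∈ G → r a ≤ r b) (h2 : ∀ a b, r a = r b → sameSCC G a b)
    {i : Fin n} {m : ℕ} {f : ℕ → Fin n} (hm : sameSCC G (f m) i)
    (hf : ∀ t, t < m → condArc G (f t) (f (t + 1))) : m ≤ r i := by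
  have key : ∀ t, t ≤ m → t ≤ r (f t) := by
    intro t
    induction t with
    | zero => intro _; exact Nat.zero_le _
    | succ t ih =>
      intro ht
      have := ih (by omega)
      have := rank_lt_of_condArc h1 h2 (hf t (by omega))
      omega
  have := key m le_rfl
  have := rank_eq_of_sameSCC h1 hm
  omega

theorem level_le_of_rank {G : Network n} {r : Fin n → ℕ}
    (h1 : ∀ a b, (a, b) ∈ G → r a ≤ r b) (h2 : ∀ a b, r a = r b → sameSCC G a b)
    (i : Fin n) : level G i ≤ r i := by
  unfold level
  refine csSup_le' ?_
  rintro m ⟨f, -, hm, hf⟩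
  exact path_length_le_rank h1 h2 hm hf

/-- Descending along in-neighbours of rank one less yields a path of `C(G)` with as many arcs as
the rank of its end. Only the values of `f` on `0, …, m` matter. -/
theorem exists_path_of_rank {G : Network n} {r : Fin n → ℕ}
    (h1 : ∀ a b, (a, b) ∈ G → r a ≤ r b) (h2 : ∀ a b, r a = r b → sameSCC G a b)
    (h3 : ∀ b, 0 < r b → ∃ a, r b = r a + 1 ∧ (a, b) ∈ G) (m : ℕ) :
    ∀ i, r i = m → ∃ f : ℕ → Fin n, isSourceSCC G (f 0) ∧ f m = i ∧
      ∀ t, t < m → condArc G (f t) (f (t + 1)) := by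
  induction m with
  | zero =>
    intro i hi
    refine ⟨fun _ => i, ?_, rfl, by intro t ht; omega⟩
    intro b hb
    have : r b < r i := rank_lt_of_condArc h1 h2 hb
    omega
  | succ m ih =>
    intro i hi
    obtain ⟨a, ha, hai⟩ := h3 i (by omega)
    obtain ⟨f, h0, hfm, hf⟩ := ih a (by omega)
    refine ⟨fun t => if t ≤ m then f t else i, by simpa using h0, by simp, ?_⟩
    intro t ht
    rcases Nat.lt_succ_iff_lt_or_eq.mp ht with h | h
    · have e1 : t ≤ m := by omega
      have e2 : t + 1 ≤ m := by omega
      simpa [e1, e2] using hf t h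
    · subst h
      simp only [le_refl, if_true, hfm]
      rw [if_neg (by omega)]
      refine ⟨fun hs => ?_, a, i, sameSCC_refl _ _, sameSCC_refl _ _, hai⟩
      have := rank_eq_of_sameSCC h1 hs
      omega

theorem level_eq_of_rank {G : Network n} {r : Fin n → ℕ}
    (h1 : ∀ a b, (a, b) ∈ G → r a ≤ r b) (h2 : ∀ a b, r a = r b → sameSCC G a b)
    (h3 : ∀ b, 0 < r b → ∃ a, r b = r a + 1 ∧ (a, b) ∈ G) (i : Fin n) : level G i = r i := by
  refine le_antisymm (level_le_of_rank h1 h2 i) ?_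
  obtain ⟨f, h0, hfm, hf⟩ := exists_path_of_rank h1 h2 h3 (r i) i rfl
  unfold level
  refine le_csSup ⟨r i, ?_⟩ ⟨f, h0, by rw [hfm]; exact sameSCC_refl G i, hf⟩
  rintro m ⟨g, -, hm, hg⟩
  exact path_length_le_rank h1 h2 hm hg

/-- A node of positive level has an incoming arc in the condensation. -/
theorem exists_condArc_of_level_pos {G : Network n} {b : Fin n} (hb : 0 < level G b) :
    ∃ a b', sameSCC G b' b ∧ condArc G a b' := by
  set S := {m : ℕ | ∃ f : ℕ → Fin n, isSourceSCC G (f 0) ∧ sameSCC G (f m) b ∧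
    ∀ t, t < m → condArc G (f t) (f (t + 1))} with hS
  have hl : level G b = sSup S := rfl
  have hne : S.Nonempty := by
    by_contra h
    rw [Set.not_nonempty_iff_eq_empty] at h
    rw [hl, h] at hb
    simp at hb
  have hbd : BddAbove S := by
    -- an unbounded set of naturals has the junk supremum `0`
    by_contra h
    rw [hl, csSup_of_not_bddAbove h] at hb
    simp at hb
  obtain ⟨f, -, hm, hf⟩ := Nat.sSup_mem hne hbd
  rw [← hl] at hm hf
  refine ⟨f (level G b - 1), f (level G b), hm, ?_⟩
  have := hf (level G b - 1) (by omega)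
  rwa [Nat.sub_add_cancel hb] at this

/-! ### Costs and out-degrees -/

/-- The coefficient of `c` in the utility of agent `i`. -/
def costSum (G : Network n) (i : Fin n) : ℝ :=
  ∑ k ∈ NinS G i, (1 : ℝ) / ((Pset G i k).card : ℝ)

theorem Pset_card_pos (G : Network n) (i k : Fin n) : (0 : ℝ) < ((Pset G i k).card : ℝ) := by
  have : 0 < (Pset G i k).card := Finset.card_pos.mpr ⟨i, by simp [Pset]⟩
  exact_mod_cast this

theorem costSum_nonneg (G : Network n) (i : Fin n) : 0 ≤ costSum G i :=
  Finset.sum_nonneg fun k _ => (one_div_pos.mpr (Pset_card_pos G i k)).le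

theorem costSum_le (G : Network n) (i : Fin n) : costSum G i ≤ n := by
  have h : costSum G i ≤ ∑ _k ∈ NinS G i, (1 : ℝ) := by
    refine Finset.sum_le_sum fun k _ => ?_
    have h1 : (1 : ℝ) ≤ ((Pset G i k).card : ℝ) := by
      exact_mod_cast (show 0 < (Pset G i k).card by exact_mod_cast Pset_card_pos G i k)
    exact (div_le_one (Pset_card_pos G i k)).mpr h1
  have h2 : (NinS G i).card ≤ n := by
    simpa using Finset.card_le_univ (NinS G i)
  have h3 : ((NinS G i).card : ℝ) ≤ n := by exact_mod_cast h2
  simp at h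
  linarith

/-- An additional out-edge of `i` can only lower the costs of `i`. -/
theorem costSum_insert_le (G : Network n) {i j : Fin n} (hij : i ≠ j) :
    costSum (insert (i, j) G) i ≤ costSum G i := by
  have hsub : NinS (insert (i, j) G) i ⊆ NinS G i := by
    intro k hk
    simp only [NinS, Finset.mem_filter, Finset.mem_univ, true_and, Finset.mem_insert,
      Prod.mk.injEq, not_or] at hk ⊢
    grind
  unfold costSum
  refine (Finset.sum_le_sum fun k _ => ?_).trans
    (Finset.sum_le_sum_of_subset_of_nonneg hsub
      fun k _ _ => (one_div_pos.mpr (Pset_card_pos G i k)).le)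
  refine one_div_le_one_div_of_le (Pset_card_pos G i k) ?_
  refine Nat.cast_le.mpr (Finset.card_le_card ?_)
  intro x hx
  simp only [Pset, Finset.mem_filter, Finset.mem_univ, true_and, Finset.mem_insert] at hx ⊢
  tauto

/-- A new single edge `ij` strictly raises the costs of `j`: the costs caused by the previous
subordinates are unchanged and `i` is a new one. -/
theorem costSum_lt_insert (G : Network n) {i j : Fin n} (hij : i ≠ j) (h1 : (i, j) ∉ G)
    (h2 : (j, i) ∉ G) : costSum G j < costSum (insert (i, j) G) j := by
  have hN : NinS (insert (i, j) G) j = insert i (NinS G j) := by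
    ext k
    simp only [NinS, Finset.mem_filter, Finset.mem_univ, true_and, Finset.mem_insert,
      Prod.mk.injEq, not_or]
    grind
  have hi : i ∉ NinS G j := by simp [NinS, h1]
  unfold costSum
  rw [hN, Finset.sum_insert hi]
  have hP : ∑ k ∈ NinS G j, (1 : ℝ) / ((Pset (insert (i, j) G) j k).card : ℝ)
      = ∑ k ∈ NinS G j, (1 : ℝ) / ((Pset G j k).card : ℝ) := by
    refine Finset.sum_congr rfl fun k hk => ?_
    have hki : k ≠ i := fun h => hi (h ▸ hk)
    have : Pset (insert (i, j) G) j k = Pset G j k := by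
      ext x
      simp only [Pset, Finset.mem_filter, Finset.mem_univ, true_and, Finset.mem_insert,
        Prod.mk.injEq]
      grind
    rw [this]
  rw [hP]
  have := one_div_pos.mpr (Pset_card_pos (insert (i, j) G) j i)
  linarith

theorem Nout_card_insert (G : Network n) {i j : Fin n} (h : (i, j) ∉ G) :
    (Nout (insert (i, j) G) i).card = (Nout G i).card + 1 := by
  have : Nout (insert (i, j) G) i = insert j (Nout G i) := by
    ext k
    simp only [Nout, Finset.mem_filter, Finset.mem_univ, true_and, Finset.mem_insert,
      Prod.mk.injEq]
  rw [this, Finset.card_insert_of_notMem (by simp [Nout, h])]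

theorem Nout_insert_ne (G : Network n) {i j : Fin n} (hij : i ≠ j) :
    Nout (insert (i, j) G) j = Nout G j := by
  ext k
  simp only [Nout, Finset.mem_filter, Finset.mem_univ, true_and, Finset.mem_insert,
    Prod.mk.injEq]
  grind

theorem utility_eq (H : ℕ → ℝ) (G : Network n) (i : Fin n) :
    utility 1 1 H G i = ((Nout G i).card : ℝ) + H (level G i) - costSum G i := by
  simp [utility, costSum]

theorem utility_lt_insert (H : ℕ → ℝ) (G : Network n) {i j : Fin n} (hij : i ≠ j)
    (h : (i, j) ∉ G) (hl : level (insert (i, j) G) i = level G i) :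
    utility 1 1 H G i < utility 1 1 H (insert (i, j) G) i := by
  rw [utility_eq, utility_eq, hl, Nout_card_insert G h]
  have := costSum_insert_le G hij
  push_cast
  linarith

/-! ### Levels after adding or deleting an edge -/

theorem level_erase_of_detour {G : Network n} {i j m : Fin n}
    (h1 : ∀ a b, (a, b) ∈ G → level G a ≤ level G b)
    (h2 : ∀ a b, level G a = level G b → sameSCC G a b)
    (h3 : ∀ b, 0 < level G b → ∃ a, level G b = level G a + 1 ∧ (a, b) ∈ G)
    (hmi : m ≠ i) (hmj : m ≠ j) (him : (i, m) ∈ G) (hmi' : (m, i) ∈ G) (hmj' : (m, j) ∈ G)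
    (x : Fin n) : level (G.erase (i, j)) x = level G x := by
  have e1 : (i, m) ∈ G.erase (i, j) := by simp [him, hmj]
  have e2 : (m, j) ∈ G.erase (i, j) := by simp [hmj', hmi]
  have hr : ∀ a b, (a, b) ∈ G → reach (G.erase (i, j)) a b := by
    intro a b hab
    by_cases h : (a, b) = (i, j)
    · obtain ⟨rfl, rfl⟩ := Prod.mk.inj h
      exact Relation.ReflTransGen.trans (Relation.ReflTransGen.single e1)
        (Relation.ReflTransGen.single e2)
    · exact Relation.ReflTransGen.single (Finset.mem_erase.mpr ⟨h, hab⟩)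
  refine level_eq_of_rank (fun a b hab => h1 a b (Finset.mem_of_mem_erase hab))
    (fun a b hab => ⟨reach_of_edges hr (h2 a b hab).1, reach_of_edges hr (h2 a b hab).2⟩) ?_ x
  intro b hb
  obtain ⟨a, ha, hab⟩ := h3 b hb
  by_cases h : (a, b) = (i, j)
  · obtain ⟨rfl, rfl⟩ := Prod.mk.inj h
    have := h1 _ _ him
    have := h1 _ _ hmi'
    exact ⟨m, by omega, e2⟩
  · exact ⟨a, ha, Finset.mem_erase.mpr ⟨h, hab⟩⟩

theorem reach_insert {G : Network n} {e : Fin n × Fin n} {a b : Fin n} (h : reach G a b) :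
    reach (insert e G) a b :=
  reach_of_edges (fun _ _ hab => Relation.ReflTransGen.single (Finset.mem_insert_of_mem hab)) h

theorem level_insert_up {G : Network n} {i j : Fin n}
    (h1 : ∀ a b, (a, b) ∈ G → level G a ≤ level G b)
    (h2 : ∀ a b, level G a = level G b → sameSCC G a b)
    (h3 : ∀ b, 0 < level G b → ∃ a, level G b = level G a + 1 ∧ (a, b) ∈ G)
    (hij : level G i ≤ level G j) (x : Fin n) : level (insert (i, j) G) x = level G x := by
  refine level_eq_of_rank ?_
    (fun a b hab => ⟨reach_insert (h2 a b hab).1, reach_insert (h2 a b hab).2⟩) ?_ x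
  · intro a b hab
    rcases Finset.mem_insert.mp hab with h | h
    · obtain ⟨rfl, rfl⟩ := Prod.mk.inj h
      exact hij
    · exact h1 _ _ h
  · intro b hb
    obtain ⟨a, ha, hab⟩ := h3 b hb
    exact ⟨a, ha, Finset.mem_insert_of_mem hab⟩

theorem reach_of_level_le {G : Network n}
    (h2 : ∀ a b, level G a = level G b → sameSCC G a b)
    (h3 : ∀ b, 0 < level G b → ∃ a, level G b = level G a + 1 ∧ (a, b) ∈ G) (m : ℕ) :
    ∀ p q, level G q = m → level G p ≤ m → reach G p q := by
  induction m with
  | zero => intro p q hq hp; exact (h2 p q (by omega)).1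
  | succ m ih =>
    intro p q hq hp
    rcases Nat.le_succ_iff.mp hp with h | h
    · obtain ⟨a, ha, haq⟩ := h3 q (by omega)
      exact Relation.ReflTransGen.tail (ih p a (by omega) h) haq
    · exact (h2 p q (by omega)).1

/-- A downward edge `ij` collapses the levels between those of `j` and `i` into one component, and
the levels above shift down accordingly. -/
theorem level_insert_down {G : Network n} {i j : Fin n}
    (h1 : ∀ a b, (a, b) ∈ G → level G a ≤ level G b)
    (h2 : ∀ a b, level G a = level G b → sameSCC G a b)
    (h3 : ∀ b, 0 < level G b → ∃ a, level G b = level G a + 1 ∧ (a, b) ∈ G)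
    (hij : level G j < level G i) : level (insert (i, j) G) i ≤ level G j := by
  let r : Fin n → ℕ := fun x => if level G x ≤ level G j then level G x else
    if level G x ≤ level G i then level G j else level G x - (level G i - level G j)
  have hri : r i = level G j := by
    simp only [r]
    split_ifs <;> omega
  rw [← hri]
  refine level_le_of_rank ?_ ?_ i
  · intro a b hab
    have : (a = i ∧ b = j) ∨ level G a ≤ level G b := by
      rcases Finset.mem_insert.mp hab with h | h
      · exact Or.inl (Prod.mk.inj h)
      · exact Or.inr (h1 _ _ h)
    rcases this with ⟨rfl, rfl⟩ | h
    · simp only [r]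
      split_ifs <;> omega
    · simp only [r]
      split_ifs <;> omega
  · intro a b hab
    have hcases : level G a = level G b ∨
        (level G j ≤ level G a ∧ level G a ≤ level G i) ∧
          (level G j ≤ level G b ∧ level G b ≤ level G i) := by
      simp only [r] at hab
      split_ifs at hab <;> omega
    -- nodes at levels between those of `j` and `i` lie on a cycle through `ij`
    have hmid : ∀ x y, level G x ≤ level G i → level G j ≤ level G y →
        reach (insert (i, j) G) x y := by
      intro x y hx hy
      have e : reach (insert (i, j) G) i j :=
        Relation.ReflTransGen.single (Finset.mem_insert_self _ _)
      exact Relation.ReflTransGen.trans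
        (Relation.ReflTransGen.trans (reach_insert (reach_of_level_le h2 h3 _ x i rfl hx)) e)
        (reach_insert (reach_of_level_le h2 h3 _ j y rfl hy))
    rcases hcases with h | ⟨ha, hb⟩
    · exact ⟨reach_insert (h2 a b h).1, reach_insert (h2 a b h).2⟩
    · exact ⟨hmid a b ha.2 hb.1, hmid b a hb.2 ha.1⟩

/-- a hierarchical structure with more than one level, exactly one SCC per
level, every SCC complete with more than two nodes, and single edges exactly from each
node to every node one level above, is a consensual equilibrium network for some
utility parameters. -/
theorem stmt9 {n : ℕ} (hn : 3 ≤ n) (G : Network n) (hG : validNetwork G)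
    (hconn : weaklyConnected G) (hnc : noDirectedCycles G)
    (hlevels : ∃ i j : Fin n, level G i ≠ level G j)
    (honescc : ∀ i j : Fin n, level G i = level G j → sameSCC G i j)
    (hcomp : completeSCCs G)
    (hsize : ∀ i : Fin n, 2 < (sccSet G i).card)
    (hsingle : ∀ p q : Fin n, ((p, q) ∈ G ∧ (q, p) ∉ G) ↔ level G q = level G p + 1) :
    ∃ (γ c : ℝ) (H : ℕ → ℝ), UtilityParams γ c H ∧ eqConsensual γ c H G := by
  have h1 : ∀ a b, (a, b) ∈ G → level G a ≤ level G b := by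
    intro a b hab
    by_cases hba : (b, a) ∈ G
    · exact (level_congr (G := G) ⟨Relation.ReflTransGen.single hab,
        Relation.ReflTransGen.single hba⟩).le
    · have := (hsingle a b).mp ⟨hab, hba⟩
      omega
  have h3 : ∀ b, 0 < level G b → ∃ a, level G b = level G a + 1 ∧ (a, b) ∈ G := by
    intro b hb
    obtain ⟨x, y, hy, hns, a', b', hxa, hyb, hab⟩ := exists_condArc_of_level_pos hb
    have hba : (b', a') ∉ G := by
      intro hba
      exact hns (sameSCC_trans hxa (sameSCC_trans
        ⟨Relation.ReflTransGen.single hab, Relation.ReflTransGen.single hba⟩ (sameSCC_symm hyb)))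
    have hl := (hsingle a' b').mp ⟨hab, hba⟩
    have hb' := level_congr (sameSCC_trans (sameSCC_symm hyb) hy)
    exact ⟨a', by omega, ((hsingle a' b).mpr (by omega)).1⟩
  refine ⟨1, 1, fun m => ((n : ℝ) + 2) * m, ⟨one_pos, one_pos, ?_, by simp⟩, ?_⟩
  · intro a b hab
    have : (a : ℝ) < b := by exact_mod_cast hab
    have : (0 : ℝ) < (n : ℝ) + 2 := by positivity
    simp only
    gcongr
  intro i j hij
  constructor
  · intro hmem
    obtain ⟨m, hm, hmn⟩ : ∃ m ∈ sccSet G i, m ∉ ({i, j} : Finset (Fin n)) :=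
      Finset.exists_mem_notMem_of_card_lt_card (Finset.card_le_two.trans_lt (hsize i))
    simp only [Finset.mem_insert, Finset.mem_singleton, not_or] at hmn
    have hms : sameSCC G i m := by simpa [sccSet] using hm
    obtain ⟨him, hmi⟩ := hcomp i m (Ne.symm hmn.1) hms
    have hlm := level_congr hms
    have hmj : (m, j) ∈ G := by
      by_cases hji : (j, i) ∈ G
      · exact (hcomp m j hmn.2 (sameSCC_trans (sameSCC_symm hms)
          ⟨Relation.ReflTransGen.single hmem, Relation.ReflTransGen.single hji⟩)).1
      · have := (hsingle i j).mp ⟨hmem, hji⟩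
        exact ((hsingle m j).mpr (by omega)).1
    have hlev := level_erase_of_detour h1 honescc h3 hmn.1 hmn.2 him hmi hmj i
    have hins : insert (i, j) (G.erase (i, j)) = G := Finset.insert_erase hmem
    have := utility_lt_insert (fun m : ℕ => ((n : ℝ) + 2) * m) (G.erase (i, j)) hij (by simp)
      (by rw [hins, hlev])
    rwa [hins] at this
  · intro hmem
    rcases lt_or_ge (level G j) (level G i) with hlt | hge
    · left
      have hl := level_insert_down h1 honescc h3 hlt
      rw [utility_eq, utility_eq, Nout_card_insert G hmem]
      have c1 := costSum_nonneg (insert (i, j) G) i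
      have c2 := costSum_le G i
      have hl' : (level (insert (i, j) G) i : ℝ) + 1 ≤ level G i := by
        exact_mod_cast (by omega : level (insert (i, j) G) i + 1 ≤ level G i)
      have hn0 : (0 : ℝ) ≤ (n : ℝ) := Nat.cast_nonneg n
      push_cast
      nlinarith
    · right
      have hji : (j, i) ∉ G := by
        intro hji
        have hle := h1 _ _ hji
        exact hmem (hcomp i j hij (honescc i j (by omega))).1
      have hlev := level_insert_up h1 honescc h3 hge
      refine ⟨(utility_lt_insert _ G hij hmem (hlev i)).le, ?_⟩
      rw [utility_eq, utility_eq, hlev j, Nout_insert_ne G hij]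
      have := costSum_lt_insert G hij hmem hji
      linarith

end
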